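/- arXiv:1707.06688 — 2 statements merged into one kernel-verified Lean document; each statement's English description precedes it below -/
import Mathlib

section
/- Let Λ ⊂ ℝ^n be a full-rank lattice, σ_s > 0, X ~ D_{Λ, σ_s}, and P_0(Λ) = Pr[X = 0] = ((2πσ_s²)^{n/2} · f_{σ_s}(Λ))^{−1}. Then for every real a > 1, setting φ(a) = 1 − (1/(2a))·log(2ae), one has (1/n)·H(X) ≤ −(1/n)·log P_0(Λ) + a·(1 − P_0(Λ)) + e^{−a·φ(a)·n}/(n·φ(a)). -/
open MeasureTheory Real Filter Pointwise
open scoped ENNReal RealInnerProductSpace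

noncomputable section

/-- The (continuous) Gaussian density with parameter `σ` on `ℝⁿ`:
`f_σ(x) = (2πσ²)^{-n/2} exp(-‖x‖²/(2σ²))`. -/
def gaussF (n : ℕ) (σ : ℝ) (x : EuclideanSpace ℝ (Fin n)) : ℝ :=
  (2 * π * σ ^ 2) ^ (-(n : ℝ) / 2) * Real.exp (-‖x‖ ^ 2 / (2 * σ ^ 2))

/-- The Gaussian mass `f_σ(S) = Σ_{y ∈ S} f_σ(y)` of a (countable) set `S ⊆ ℝⁿ`. -/
def gaussMass (n : ℕ) (σ : ℝ) (S : Set (EuclideanSpace ℝ (Fin n))) : ℝ :=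
  ∑' y : S, gaussF n σ y

/-- The Gaussian measure `N(0, σ² Iₙ)` on `ℝⁿ`, given by its density w.r.t. Lebesgue measure. -/
def gaussMeasure (n : ℕ) (σ : ℝ) : Measure (EuclideanSpace ℝ (Fin n)) :=
  volume.withDensity fun x => ENNReal.ofReal (gaussF n σ x)

/-- The coset `S + t` of a set `S ⊆ ℝⁿ`, i.e. `{x | x - t ∈ S}`. -/
def coset (n : ℕ) (S : Set (EuclideanSpace ℝ (Fin n))) (t : EuclideanSpace ℝ (Fin n)) :
    Set (EuclideanSpace ℝ (Fin n)) := {x | x - t ∈ S}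

/-- The Voronoi cell of `S`: `{x | ⟪x,y⟫ ≤ ‖y‖²/2 for all y ∈ S}`. -/
def voronoi (n : ℕ) (S : Set (EuclideanSpace ℝ (Fin n))) : Set (EuclideanSpace ℝ (Fin n)) :=
  {x | ∀ y ∈ S, ⟪x, y⟫ ≤ ‖y‖ ^ 2 / 2}

/-- The inverse error function `err⁻¹_ε(Λ)`: the least `s > 0` such that a standard Gaussian
leaves `s · V(Λ)` with probability at most `ε`. -/
def errInv (n : ℕ) (ε : ℝ) (S : Set (EuclideanSpace ℝ (Fin n))) : ℝ :=
  sInf {s : ℝ | 0 < s ∧ gaussMeasure n 1 ((s • voronoi n S)ᶜ) ≤ ENNReal.ofReal ε}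

/-- The Shannon entropy (in nats) of the discrete Gaussian `D_{S,σ}` supported on `S`,
which assigns mass `f_σ(y)/f_σ(S)` to each `y ∈ S`. -/
def dgEntropy (n : ℕ) (σ : ℝ) (S : Set (EuclideanSpace ℝ (Fin n))) : ℝ :=
  -∑' y : S, (gaussF n σ y / gaussMass n σ S) * Real.log (gaussF n σ y / gaussMass n σ S)

/-- The flatness factor `ε_Λ(σ) = sup_{x ∈ V(Λ)} |V(Λ)·f_σ(Λ+x) − 1|`. -/
def flatness (n : ℕ) (L : Submodule ℤ (EuclideanSpace ℝ (Fin n))) (σ : ℝ) : ℝ :=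
  ⨆ x : voronoi n (L : Set (EuclideanSpace ℝ (Fin n))),
    |ZLattice.covolume L volume *
        gaussMass n σ (coset n (L : Set (EuclideanSpace ℝ (Fin n))) x) - 1|

/-!
With `b = 1 / (2σ²)` and `Z(y) = b‖y‖²` the discrete Gaussian is the Gibbs law `e^{-Z} / Θ(b)`,
where `Θ(b) = ∑_{y ∈ Λ} e^{-b‖y‖²}`. Hence `P₀ = 1 / Θ(b)` and `H(X) = log Θ(b) + 𝔼 Z`, and everything
rests on an upper bound for `𝔼 Z`. Off the origin, write `Z = an + (Z - an)`: the first term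
contributes `an(1 - P₀)`, and by `Z - an ≤ e^{s(Z - an)} / s` with `s = 1 - 1 / (2a)` the second
contributes at most `e^{-san} / s · Θ(b / (2a)) / Θ(b)`. Banaszczyk's inequality
`Θ(b') ≤ (b / b')^{n/2} Θ(b)` for `b' ≤ b` bounds this by `e^{-san} (2a)^{n/2} / s = e^{-aφn} / s`,
and `φ ≤ s`.

Banaszczyk's inequality is proved without Poisson summation: a Gaussian is an autocorrelation, the
periodisation of an autocorrelation is maximal at `0` (by `2pq ≤ p² + q²` on a fundamental domain),
and averaging `∑_{y ∈ Λ} e^{-b‖x + y‖²} ≤ Θ(b)` over `x` against a Gaussian gives the inequality.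
-/

section Periodization

variable {E : Type*} [AddCommGroup E]

/-- The periodisation `x ↦ ∑_{z ∈ L} g (x + z)` of `g` along `L`. Values in `ℝ≥0∞` make
summability and the exchange of sums and integrals automatic. -/
def periodize (L : Submodule ℤ E) (g : E → ℝ≥0∞) (x : E) : ℝ≥0∞ :=
  ∑' z : L, g (x + z)

lemma periodize_add_coe (L : Submodule ℤ E) (g : E → ℝ≥0∞) (x : E) (w : L) :
    periodize L g (x + w) = periodize L g x := by
  simp only [periodize, add_assoc]
  exact (Equiv.addLeft w).tsum_eq fun z : L => g (x + z)

lemma periodize_comp_add_right (L : Submodule ℤ E) (g : E → ℝ≥0∞) (u x : E) :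
    periodize L (fun y => g (y + u)) x = periodize L g (x + u) :=
  tsum_congr fun z => by rw [add_right_comm]

lemma periodize_const_mul (L : Submodule ℤ E) (c : ℝ≥0∞) (g : E → ℝ≥0∞) (x : E) :
    periodize L (fun y => c * g y) x = c * periodize L g x :=
  ENNReal.tsum_mul_left

variable [MeasurableSpace E]

/-- The autocorrelation `x ↦ ∫ g(y) g(y + x) dμ(y)` of a nonnegative function. -/
def autocorrelation (μ : Measure E) (g : E → ℝ≥0∞) (x : E) : ℝ≥0∞ :=
  ∫⁻ y, g y * g (y + x) ∂μ

variable [MeasurableAdd E] {L : Submodule ℤ E} {μ : Measure E} {f g h : E → ℝ≥0∞}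

lemma autocorrelation_comp_add_right [μ.IsAddRightInvariant] (g : E → ℝ≥0∞) (u x : E) :
    autocorrelation μ (fun y => g (y + u)) x = autocorrelation μ g x := by
  simp only [autocorrelation, add_right_comm _ x u]
  exact lintegral_add_right_eq_self (fun y => g y * g (y + x)) u

variable [Countable L]

lemma measurable_periodize (hg : Measurable g) : Measurable (periodize L g) :=
  Measurable.tsum fun z => hg.comp (measurable_add_const (z : E))

lemma lintegral_mul_periodize_add (hf : Measurable f) (hg : Measurable g) (x : E) :
    ∫⁻ y, f y * periodize L g (y + x) ∂μ =
      periodize L (fun u => ∫⁻ y, f y * g (y + u) ∂μ) x := by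
  simp only [periodize, ← ENNReal.tsum_mul_left, add_assoc]
  exact lintegral_tsum fun z => (hf.mul (hg.comp (measurable_add_const (x + z)))).aemeasurable

variable [μ.IsAddLeftInvariant] {F : Set E}

lemma setLIntegral_periodize_mul (hF : IsAddFundamentalDomain L F μ) (hf : Measurable f)
    (hh : Measurable h) (hper : ∀ (x : E) (z : L), h (x + z) = h x) :
    ∫⁻ x in F, periodize L f x * h x ∂μ = ∫⁻ x, f x * h x ∂μ := by
  have : MeasurableConstVAdd L E := ⟨fun z => measurable_const_add (z : E)⟩
  have : VAddInvariantMeasure L E μ := ⟨fun z s _ => measure_preimage_add μ (z : E) s⟩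
  have vadd_eq (z : L) (x : E) : z +ᵥ x = x + z := add_comm _ _
  simp only [hF.lintegral_eq_tsum'', vadd_eq, hper, periodize, ← ENNReal.tsum_mul_right]
  exact lintegral_tsum fun z =>
    ((hf.comp (measurable_add_const (z : E))).mul hh).aemeasurable

lemma setLIntegral_periodize_mul_periodize_add (hF : IsAddFundamentalDomain L F μ)
    (hg : Measurable g) (x : E) :
    ∫⁻ y in F, periodize L g y * periodize L g (y + x) ∂μ =
      periodize L (autocorrelation μ g) x := by
  have invariant (y : E) (z : L) : periodize L g (y + z + x) = periodize L g (y + x) := by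
    rw [add_right_comm, periodize_add_coe]
  calc ∫⁻ y in F, periodize L g y * periodize L g (y + x) ∂μ
      = ∫⁻ y, g y * periodize L g (y + x) ∂μ :=
        setLIntegral_periodize_mul hF hg
          ((measurable_periodize hg).comp (measurable_add_const x)) invariant
    _ = periodize L (autocorrelation μ g) x := lintegral_mul_periodize_add hg hg x

lemma two_mul_mul_le_mul_self_add_mul_self {R : Type*} [CommSemiring R] [LinearOrder R]
    [CanonicallyOrderedAdd R] (p q : R) : 2 * (p * q) ≤ p * p + q * q := by
  wlog hpq : p ≤ q generalizing p q
  · simpa only [mul_comm q p, add_comm (q * q)] using this q p (le_of_not_ge hpq)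
  obtain ⟨d, rfl⟩ := exists_add_of_le hpq
  calc 2 * (p * (p + d)) ≤ 2 * (p * (p + d)) + d * d := le_self_add
    _ = p * p + (p + d) * (p + d) := by ring

theorem periodize_autocorrelation_le_apply_zero (hF : IsAddFundamentalDomain L F μ)
    (hg : Measurable g) (x : E) :
    periodize L (autocorrelation μ g) x ≤ periodize L (autocorrelation μ g) 0 := by
  set P := periodize L g
  have hP : Measurable P := measurable_periodize hg
  have energy : ∫⁻ y in F, P y * P y ∂μ = periodize L (autocorrelation μ g) 0 := by
    simpa only [add_zero] using setLIntegral_periodize_mul_periodize_add hF hg 0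
  have energy_translate : ∫⁻ y in F, P (y + x) * P (y + x) ∂μ =
      periodize L (autocorrelation μ g) 0 := by
    have := setLIntegral_periodize_mul_periodize_add (g := fun y => g (y + x)) hF
      (hg.comp (measurable_add_const x)) 0
    simpa only [add_zero, periodize_comp_add_right, funext (autocorrelation_comp_add_right g x)]
      using this
  have doubled : 2 * periodize L (autocorrelation μ g) x ≤
      2 * periodize L (autocorrelation μ g) 0 := by
    calc 2 * periodize L (autocorrelation μ g) x
        = ∫⁻ y in F, 2 * (P y * P (y + x)) ∂μ := by
          rw [lintegral_const_mul _ (by fun_prop), setLIntegral_periodize_mul_periodize_add hF hg]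
      _ ≤ ∫⁻ y in F, P y * P y + P (y + x) * P (y + x) ∂μ :=
          lintegral_mono fun y => two_mul_mul_le_mul_self_add_mul_self _ _
      _ = 2 * periodize L (autocorrelation μ g) 0 := by
          rw [lintegral_add_left (by fun_prop), energy, energy_translate, two_mul]
  exact (ENNReal.mul_le_mul_iff_right two_ne_zero ENNReal.ofNat_ne_top).mp doubled

end Periodization

section GaussianWeight

variable {E : Type*} [NormedAddCommGroup E]

/-- The unnormalised Gaussian `x ↦ e^{-b‖x‖²}`, valued in `ℝ≥0∞` so that it can be periodised. -/
def gaussianWeight (b : ℝ) (x : E) : ℝ≥0∞ :=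
  ENNReal.ofReal (exp (-(b * ‖x‖ ^ 2)))

lemma measurable_gaussianWeight [MeasurableSpace E] [OpensMeasurableSpace E] (b : ℝ) :
    Measurable (gaussianWeight (E := E) b) := by
  unfold gaussianWeight
  fun_prop

variable [InnerProductSpace ℝ E]

lemma gaussianWeight_mul_gaussianWeight_add {b c : ℝ} (hbc : b + c ≠ 0) (x w : E) :
    gaussianWeight c x * gaussianWeight b (x + w) =
      gaussianWeight (b * c / (b + c)) w * gaussianWeight (b + c) (x + (b / (b + c)) • w) := by
  simp only [gaussianWeight, ← ENNReal.ofReal_mul (exp_pos _).le, ← exp_add]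
  congr 2
  rw [norm_add_sq_real, norm_add_sq_real, inner_smul_right, norm_smul, mul_pow,
    Real.norm_eq_abs, sq_abs]
  field_simp
  ring

variable [MeasurableSpace E] [BorelSpace E] [FiniteDimensional ℝ E]

lemma lintegral_gaussianWeight {b : ℝ} (hb : 0 < b) :
    ∫⁻ x : E, gaussianWeight b x =
      ENNReal.ofReal ((π / b) ^ (Module.finrank ℝ E / 2 : ℝ)) := by
  have integral_eq : ∫ x : E, exp (-(b * ‖x‖ ^ 2)) = (π / b) ^ (Module.finrank ℝ E / 2 : ℝ) := by
    simpa only [neg_mul] using GaussianFourier.integral_rexp_neg_mul_sq_norm (V := E) hb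
  have integrable : Integrable fun x : E => exp (-(b * ‖x‖ ^ 2)) :=
    .of_integral_ne_zero (by rw [integral_eq]; positivity)
  rw [← integral_eq,
    ofReal_integral_eq_lintegral_ofReal integrable (.of_forall fun _ => (exp_pos _).le)]
  rfl

lemma lintegral_gaussianWeight_mul_gaussianWeight_add {b c : ℝ} (hbc : 0 < b + c) (w : E) :
    ∫⁻ x, gaussianWeight c x * gaussianWeight b (x + w) =
      ENNReal.ofReal ((π / (b + c)) ^ (Module.finrank ℝ E / 2 : ℝ)) *
        gaussianWeight (b * c / (b + c)) w := by
  simp only [gaussianWeight_mul_gaussianWeight_add hbc.ne']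
  have translate : Measurable fun x : E => gaussianWeight (b + c) (x + (b / (b + c)) • w) :=
    (measurable_gaussianWeight _).comp (measurable_add_const _)
  rw [lintegral_const_mul _ translate, lintegral_add_right_eq_self, lintegral_gaussianWeight hbc,
    mul_comm]

variable (L : Submodule ℤ E) [DiscreteTopology L] [IsZLattice ℝ L]

theorem periodize_gaussianWeight_le_apply_zero {b : ℝ} (hb : 0 < b) (x : E) :
    periodize L (gaussianWeight b) x ≤ periodize L (gaussianWeight b) 0 := by
  set K := ENNReal.ofReal ((π / (2 * b + 2 * b)) ^ (Module.finrank ℝ E / 2 : ℝ))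
  have K_ne_zero : K ≠ 0 := (ENNReal.ofReal_pos.mpr (by positivity)).ne'
  have autocorrelation_eq : autocorrelation volume (gaussianWeight (E := E) (2 * b)) =
      fun w => K * gaussianWeight b w := by
    have half : 2 * b * (2 * b) / (2 * b + 2 * b) = b := by field_simp; ring
    ext w
    rw [autocorrelation, lintegral_gaussianWeight_mul_gaussianWeight_add (by positivity), half]
  have scaled := periodize_autocorrelation_le_apply_zero
    (ZLattice.isAddFundamentalDomain (Module.Free.chooseBasis ℤ L) volume)
    (measurable_gaussianWeight (2 * b)) x
  simp only [autocorrelation_eq, periodize_const_mul] at scaled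
  exact (ENNReal.mul_le_mul_iff_right K_ne_zero ENNReal.ofReal_ne_top).mp scaled

lemma periodize_gaussianWeight_harmonic_le {b c : ℝ} (hb : 0 < b) (hc : 0 < c) :
    periodize L (gaussianWeight (b * c / (b + c))) 0 ≤
      ENNReal.ofReal (((b + c) / c) ^ (Module.finrank ℝ E / 2 : ℝ)) *
        periodize L (gaussianWeight b) 0 := by
  set d : ℝ := Module.finrank ℝ E / 2
  have hK : ENNReal.ofReal ((π / (b + c)) ^ d) ≠ 0 := (ENNReal.ofReal_pos.mpr (by positivity)).ne'
  refine (ENNReal.mul_le_mul_iff_right hK ENNReal.ofReal_ne_top).mp ?_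
  calc ENNReal.ofReal ((π / (b + c)) ^ d) * periodize L (gaussianWeight (b * c / (b + c))) 0
      = ∫⁻ x, gaussianWeight c x * periodize L (gaussianWeight b) (x + 0) := by
        rw [lintegral_mul_periodize_add (measurable_gaussianWeight c)
          (measurable_gaussianWeight b), ← periodize_const_mul]
        simp only [lintegral_gaussianWeight_mul_gaussianWeight_add (add_pos hb hc), d]
    _ ≤ ∫⁻ x : E, gaussianWeight c x * periodize L (gaussianWeight b) 0 := by
        gcongr with x
        exact periodize_gaussianWeight_le_apply_zero L hb _
    _ = ENNReal.ofReal ((π / c) ^ d) * periodize L (gaussianWeight b) 0 := by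
        rw [lintegral_mul_const _ (measurable_gaussianWeight c), lintegral_gaussianWeight hc]
    _ = ENNReal.ofReal ((π / (b + c)) ^ d) *
          (ENNReal.ofReal (((b + c) / c) ^ d) * periodize L (gaussianWeight b) 0) := by
        rw [← mul_assoc, ← ENNReal.ofReal_mul (by positivity),
          ← mul_rpow (by positivity) (by positivity), div_mul_div_cancel₀ (by positivity)]

end GaussianWeight

section LatticeTheta

variable {E : Type*} [NormedAddCommGroup E]

/-- The theta series `Θ_L(b) = ∑_{z ∈ L} e^{-b‖z‖²}`, the partition function of the discrete
Gaussian on `L` with `b = 1 / (2σ²)`. -/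
def latticeTheta (L : Submodule ℤ E) (b : ℝ) : ℝ :=
  ∑' z : L, exp (-(b * ‖(z : E)‖ ^ 2))

section NormedSpace

variable [NormedSpace ℝ E] [FiniteDimensional ℝ E] (L : Submodule ℤ E) [DiscreteTopology L]

lemma summable_exp_neg_mul_norm_sq {b : ℝ} (hb : 0 < b) :
    Summable fun z : L => exp (-(b * ‖(z : E)‖ ^ 2)) := by
  set d := Module.finrank ℤ L + 1
  have summable_bound : Summable fun z : L => (d.factorial / b ^ d : ℝ) * ‖z‖⁻¹ ^ (2 * d) :=
    (ZLattice.summable_norm_pow_inv L (2 * d) (by omega)).mul_left _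
  refine summable_bound.of_norm_bounded_eventually ((Set.finite_singleton (0 : L)).subset ?_)
  intro z exceeds_bound
  by_contra hz
  have hz_pos : 0 < ‖(z : E)‖ := norm_pos_iff.mpr (by simpa using hz)
  refine exceeds_bound ?_
  calc ‖exp (-(b * ‖(z : E)‖ ^ 2))‖ = (exp (b * ‖(z : E)‖ ^ 2))⁻¹ := by
        rw [norm_of_nonneg (exp_pos _).le, exp_neg]
    _ ≤ ((b * ‖(z : E)‖ ^ 2) ^ d / d.factorial)⁻¹ := by
        gcongr
        exact pow_div_factorial_le_exp _ (by positivity) d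
    _ = (d.factorial / b ^ d : ℝ) * ‖z‖⁻¹ ^ (2 * d) := by
        rw [inv_div, mul_pow, ← pow_mul, inv_pow, Submodule.coe_norm, div_mul_eq_div_div,
          div_eq_mul_inv _ (‖(z : E)‖ ^ (2 * d))]

lemma one_le_latticeTheta {b : ℝ} (hb : 0 < b) : 1 ≤ latticeTheta L b := by
  simpa [latticeTheta] using (summable_exp_neg_mul_norm_sq L hb).le_tsum 0 fun _ _ => (exp_pos _).le

lemma periodize_gaussianWeight_zero {b : ℝ} (hb : 0 < b) :
    periodize L (gaussianWeight b) 0 = ENNReal.ofReal (latticeTheta L b) := by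
  rw [latticeTheta, ENNReal.ofReal_tsum_of_nonneg (fun _ => (exp_pos _).le)
    (summable_exp_neg_mul_norm_sq L hb)]
  simp only [periodize, gaussianWeight, zero_add]

end NormedSpace

theorem latticeTheta_le_rpow_mul [InnerProductSpace ℝ E] [FiniteDimensional ℝ E]
    (L : Submodule ℤ E) [DiscreteTopology L] [IsZLattice ℝ L] {b b' : ℝ} (hb' : 0 < b')
    (hbb' : b' ≤ b) :
    latticeTheta L b' ≤ (b / b') ^ (Module.finrank ℝ E / 2 : ℝ) * latticeTheta L b := by
  rcases hbb'.eq_or_lt with rfl | hlt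
  · rw [div_self hb'.ne', one_rpow, one_mul]
  have hb : 0 < b := hb'.trans hlt
  have : 0 < b - b' := sub_pos.mpr hlt
  -- `c` solves `1 / b' = 1 / b + 1 / c`
  set c := b' * b / (b - b') with hc
  have c_pos : 0 < c := by positivity
  have harmonic : b * c / (b + c) = b' := by
    rw [hc]
    field_simp
    ring
  have ratio : (b + c) / c = b / b' := by
    rw [hc]
    field_simp
    ring
  borelize E
  have key := periodize_gaussianWeight_harmonic_le L hb c_pos
  have theta_nonneg : 0 ≤ latticeTheta L b := zero_le_one.trans (one_le_latticeTheta L hb)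
  rwa [harmonic, ratio, periodize_gaussianWeight_zero L hb, periodize_gaussianWeight_zero L hb',
    ← ENNReal.ofReal_mul (by positivity), ENNReal.ofReal_le_ofReal_iff (by positivity)] at key

end LatticeTheta

section Gibbs

variable {ι : Type*} {Z : ι → ℝ}

lemma neg_tsum_gibbs_mul_log [Nonempty ι] (hS : Summable fun i => exp (-Z i))
    (hZ : Summable fun i => Z i * exp (-Z i)) :
    -∑' i, exp (-Z i) / (∑' j, exp (-Z j)) * log (exp (-Z i) / ∑' j, exp (-Z j)) =
      log (∑' i, exp (-Z i)) + (∑' i, Z i * exp (-Z i)) / ∑' i, exp (-Z i) := by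
  set S := ∑' i, exp (-Z i)
  have S_pos : 0 < S := hS.tsum_pos (fun _ => (exp_pos _).le) (Classical.arbitrary ι) (exp_pos _)
  have term (i : ι) : exp (-Z i) / S * log (exp (-Z i) / S) =
      -(log S / S * exp (-Z i) + Z i * exp (-Z i) / S) := by
    rw [log_div (exp_ne_zero _) S_pos.ne', log_exp]
    ring
  simp only [term]
  rw [tsum_neg, neg_neg, (hS.mul_left _).tsum_add (hZ.div_const _), tsum_mul_left, tsum_div_const,
    div_mul_cancel₀ _ S_pos.ne']

lemma sub_le_exp_mul_sub_div {s : ℝ} (hs : 0 < s) (z t : ℝ) :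
    z - t ≤ exp (s * (z - t)) / s := by
  rw [le_div_iff₀ hs]
  linarith [add_one_le_exp (s * (z - t))]

variable {s : ℝ}

lemma mul_exp_neg_le (hs : 0 < s) (z t : ℝ) :
    z * exp (-z) ≤ t * exp (-z) + exp (-(s * t)) / s * exp (-((1 - s) * z)) := by
  calc z * exp (-z) ≤ (t + exp (s * (z - t)) / s) * exp (-z) := by
        gcongr
        linarith [sub_le_exp_mul_sub_div hs z t]
    _ = t * exp (-z) + exp (s * (z - t) + -z) / s := by
        rw [exp_add]
        ring
    _ = t * exp (-z) + exp (-(s * t) + -((1 - s) * z)) / s := by ring_nf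
    _ = t * exp (-z) + exp (-(s * t)) / s * exp (-((1 - s) * z)) := by
        rw [exp_add]
        ring

lemma summable_mul_exp_neg (hs : 0 < s) (hZ : ∀ i, 0 ≤ Z i)
    (hsum : Summable fun i => exp (-((1 - s) * Z i))) :
    Summable fun i => Z i * exp (-Z i) := by
  refine .of_nonneg_of_le (fun i => mul_nonneg (hZ i) (exp_pos _).le) (fun i => ?_)
    (hsum.mul_left (exp (-(s * 0)) / s))
  simpa only [zero_mul, zero_add] using mul_exp_neg_le hs (Z i) 0

theorem tsum_mul_exp_neg_le (hs : 0 < s) (hZ : ∀ i, 0 ≤ Z i) {i₀ : ι} (hi₀ : Z i₀ = 0)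
    (hS : Summable fun i => exp (-Z i)) (hsum : Summable fun i => exp (-((1 - s) * Z i))) (t : ℝ) :
    ∑' i, Z i * exp (-Z i) ≤
      t * ((∑' i, exp (-Z i)) - 1) + exp (-(s * t)) / s * ∑' i, exp (-((1 - s) * Z i)) := by
  classical
  let bound (i : ι) : ℝ :=
    t * (exp (-Z i) - if i = i₀ then 1 else 0) + exp (-(s * t)) / s * exp (-((1 - s) * Z i))
  have hasSum_bound : HasSum bound
      (t * ((∑' i, exp (-Z i)) - 1) + exp (-(s * t)) / s * ∑' i, exp (-((1 - s) * Z i))) :=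
    ((hS.hasSum.sub (hasSum_ite_eq i₀ 1)).mul_left t).add (hsum.hasSum.mul_left _)
  have le_bound (i : ι) : Z i * exp (-Z i) ≤ bound i := by
    by_cases hi : i = i₀
    · subst hi
      simp only [bound, hi₀, if_true, mul_zero, neg_zero, exp_zero, sub_self, zero_add, mul_one]
      positivity
    · simpa only [bound, hi, if_false, sub_zero] using mul_exp_neg_le hs (Z i) t
  calc ∑' i, Z i * exp (-Z i) ≤ ∑' i, bound i :=
        (summable_mul_exp_neg hs hZ hsum).tsum_le_tsum le_bound hasSum_bound.summable
    _ = _ := hasSum_bound.tsum_eq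

end Gibbs

section TailRate

/-- The rate `φ(a) = 1 - log(2ae) / (2a)` of the exponential tail term. -/
def tailRate (a : ℝ) : ℝ :=
  1 - (1 / (2 * a)) * log (2 * a * exp 1)

variable {a : ℝ}

lemma tailRate_eq (ha : a ≠ 0) : tailRate a = 1 - 1 / (2 * a) * (log (2 * a) + 1) := by
  rw [tailRate, log_mul (mul_ne_zero two_ne_zero ha) (exp_ne_zero 1), log_exp]

lemma tailRate_pos (ha : 1 / 2 < a) : 0 < tailRate a := by
  have a_pos : 0 < a := by linarith
  have log_lt : log (2 * a) < 2 * a - 1 := log_lt_sub_one_of_pos (by positivity) (by linarith)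
  rw [tailRate_eq a_pos.ne', sub_pos, one_div_mul_eq_div, div_lt_one (by positivity)]
  linarith

lemma tailRate_le_one_sub (ha : 1 / 2 < a) : tailRate a ≤ 1 - 1 / (2 * a) := by
  have a_pos : 0 < a := by linarith
  have : 0 ≤ 1 / (2 * a) * log (2 * a) := mul_nonneg (by positivity) (log_nonneg (by linarith))
  rw [tailRate_eq a_pos.ne']
  linarith

lemma exp_mul_rpow_eq_exp_tailRate (ha : 0 < a) (x : ℝ) :
    exp (-((1 - 1 / (2 * a)) * (a * x))) * (2 * a) ^ (x / 2) = exp (-a * tailRate a * x) := by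
  rw [rpow_def_of_pos (by positivity), ← exp_add, tailRate_eq ha.ne']
  congr 1
  field_simp
  ring

end TailRate

section DiscreteGaussian

/-- The mean of `b‖X‖²` for the discrete Gaussian `X` on `L` with weights `e^{-b‖z‖²}`. -/
def latticeEnergy {E : Type*} [NormedAddCommGroup E] (L : Submodule ℤ E) (b : ℝ) : ℝ :=
  (∑' z : L, b * ‖(z : E)‖ ^ 2 * exp (-(b * ‖(z : E)‖ ^ 2))) / latticeTheta L b

theorem latticeEnergy_le {E : Type*} [NormedAddCommGroup E] [InnerProductSpace ℝ E]
    [FiniteDimensional ℝ E] (L : Submodule ℤ E) [DiscreteTopology L] [IsZLattice ℝ L]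
    {a b : ℝ} (ha : 1 / 2 < a) (hb : 0 < b) :
    latticeEnergy L b ≤ a * Module.finrank ℝ E * (1 - (latticeTheta L b)⁻¹) +
      exp (-a * tailRate a * Module.finrank ℝ E) / tailRate a := by
  set d : ℝ := (Module.finrank ℝ E : ℝ)
  set s : ℝ := 1 - 1 / (2 * a) with hs
  have a_pos : 0 < a := by linarith
  have s_pos : 0 < s := (tailRate_pos ha).trans_le (tailRate_le_one_sub ha)
  have theta_pos : 0 < latticeTheta L b := one_pos.trans_le (one_le_latticeTheta L hb)
  have b_rescaled_pos : 0 < b / (2 * a) := by positivity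
  have rescale (x : ℝ) : (1 - s) * (b * x) = b / (2 * a) * x := by rw [hs]; ring
  have theta_rescaled_le : latticeTheta L (b / (2 * a)) ≤ (2 * a) ^ (d / 2) * latticeTheta L b := by
    have := latticeTheta_le_rpow_mul L b_rescaled_pos (div_le_self hb.le (by linarith))
    rwa [div_div_cancel₀ hb.ne'] at this
  have tail_eq : exp (-(s * (a * d))) * (2 * a) ^ (d / 2) = exp (-a * tailRate a * d) :=
    exp_mul_rpow_eq_exp_tailRate a_pos d
  have energy_sum_le := tsum_mul_exp_neg_le (Z := fun z : L => b * ‖(z : E)‖ ^ 2) s_pos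
    (fun _ => by positivity) (i₀ := 0) (by simp) (summable_exp_neg_mul_norm_sq L hb)
    (by simpa only [rescale] using summable_exp_neg_mul_norm_sq L b_rescaled_pos) (a * d)
  simp only [rescale] at energy_sum_le
  rw [latticeEnergy, div_le_iff₀ theta_pos]
  calc _ ≤ a * d * (latticeTheta L b - 1) +
          exp (-(s * (a * d))) / s * latticeTheta L (b / (2 * a)) := energy_sum_le
    _ ≤ a * d * (latticeTheta L b - 1) +
          exp (-(s * (a * d))) / s * ((2 * a) ^ (d / 2) * latticeTheta L b) := by gcongr
    _ = (a * d * (1 - (latticeTheta L b)⁻¹) + exp (-a * tailRate a * d) / s) *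
          latticeTheta L b := by
        rw [← tail_eq]
        field_simp
    _ ≤ (a * d * (1 - (latticeTheta L b)⁻¹) + exp (-a * tailRate a * d) / tailRate a) *
          latticeTheta L b := by
        gcongr
        exacts [tailRate_pos ha, tailRate_le_one_sub ha]

variable {n : ℕ} {σ : ℝ} (L : Submodule ℤ (EuclideanSpace ℝ (Fin n)))

lemma gaussF_eq_mul_exp (σ : ℝ) (x : EuclideanSpace ℝ (Fin n)) :
    gaussF n σ x =
      (2 * π * σ ^ 2) ^ (-(n : ℝ) / 2) * exp (-(1 / (2 * σ ^ 2) * ‖x‖ ^ 2)) := by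
  rw [gaussF, neg_div (2 * σ ^ 2), one_div_mul_eq_div]

lemma gaussMass_eq_mul_latticeTheta (σ : ℝ) :
    gaussMass n σ L = (2 * π * σ ^ 2) ^ (-(n : ℝ) / 2) * latticeTheta L (1 / (2 * σ ^ 2)) := by
  simp only [gaussMass, gaussF_eq_mul_exp, tsum_mul_left]
  rfl

lemma rpow_mul_gaussMass (hσ : σ ≠ 0) :
    (2 * π * σ ^ 2) ^ ((n : ℝ) / 2) * gaussMass n σ L = latticeTheta L (1 / (2 * σ ^ 2)) := by
  rw [gaussMass_eq_mul_latticeTheta, ← mul_assoc, ← rpow_add (by positivity), neg_div,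
    add_neg_cancel, rpow_zero, one_mul]

lemma gaussF_div_gaussMass (hσ : σ ≠ 0) (x : EuclideanSpace ℝ (Fin n)) :
    gaussF n σ x / gaussMass n σ L =
      exp (-(1 / (2 * σ ^ 2) * ‖x‖ ^ 2)) / latticeTheta L (1 / (2 * σ ^ 2)) := by
  rw [gaussF_eq_mul_exp, gaussMass_eq_mul_latticeTheta, mul_div_mul_left _ _ (by positivity)]

theorem dgEntropy_eq_log_latticeTheta_add_latticeEnergy [DiscreteTopology L] (hσ : σ ≠ 0) :
    dgEntropy n σ L =
      log (latticeTheta L (1 / (2 * σ ^ 2))) + latticeEnergy L (1 / (2 * σ ^ 2)) := by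
  set b := 1 / (2 * σ ^ 2)
  have b_pos : 0 < b := by positivity
  have summable_energy : Summable fun z : L =>
      b * ‖(z : EuclideanSpace ℝ (Fin n))‖ ^ 2 *
        exp (-(b * ‖(z : EuclideanSpace ℝ (Fin n))‖ ^ 2)) := by
    refine summable_mul_exp_neg (s := 1 / 2) (by norm_num) (fun _ => by positivity) ?_
    simpa only [mul_assoc] using
      summable_exp_neg_mul_norm_sq L (b := (1 - 1 / 2) * b) (by positivity)
  simp only [dgEntropy, gaussF_div_gaussMass L hσ]
  exact neg_tsum_gibbs_mul_log (summable_exp_neg_mul_norm_sq L b_pos) summable_energy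

end DiscreteGaussian

theorem entropy_vs_mass_of_zero_general_general (n : ℕ)
    (L : Submodule ℤ (EuclideanSpace ℝ (Fin n))) [DiscreteTopology L] [IsZLattice ℝ L]
    (σs : ℝ) (hσs : σs ≠ 0) (P0 : ℝ)
    (hP0 : P0 = ((2 * π * σs ^ 2) ^ ((n : ℝ) / 2) *
      gaussMass n σs (L : Set (EuclideanSpace ℝ (Fin n))))⁻¹)
    (a : ℝ) (ha : 1 / 2 < a)
    (φ : ℝ) (hφ : φ = 1 - (1 / (2 * a)) * Real.log (2 * a * Real.exp 1)) :
    (1 / (n : ℝ)) * dgEntropy n σs (L : Set (EuclideanSpace ℝ (Fin n))) ≤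
      -(1 / (n : ℝ)) * Real.log P0 + a * (1 - P0) + Real.exp (-a * φ * n) / (n * φ) := by
  have b_pos : 0 < 1 / (2 * σs ^ 2) := by positivity
  have P0_eq : P0 = (latticeTheta L (1 / (2 * σs ^ 2)))⁻¹ := by rw [hP0, rpow_mul_gaussMass L hσs]
  have φ_eq : φ = tailRate a := hφ
  have P0_le_one : P0 ≤ 1 := P0_eq ▸ inv_le_one_of_one_le₀ (one_le_latticeTheta L b_pos)
  have energy_le := latticeEnergy_le L ha b_pos
  rw [finrank_euclideanSpace_fin, ← P0_eq, ← φ_eq] at energy_le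
  calc (1 / (n : ℝ)) * dgEntropy n σs L =
        1 / n * (-log P0 + latticeEnergy L (1 / (2 * σs ^ 2))) := by
        rw [dgEntropy_eq_log_latticeTheta_add_latticeEnergy L hσs, P0_eq, log_inv, neg_neg]
    _ ≤ 1 / n * (-log P0 + (a * n * (1 - P0) + exp (-a * φ * n) / φ)) := by gcongr
    _ = -(1 / n) * log P0 + (n / n : ℝ) * (a * (1 - P0)) + exp (-a * φ * n) / (n * φ) := by
        rw [div_mul_eq_div_div_swap]; ring
    _ ≤ -(1 / n) * log P0 + a * (1 - P0) + exp (-a * φ * n) / (n * φ) := by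
        have : 0 ≤ a * (1 - P0) := mul_nonneg (by linarith) (sub_nonneg.mpr P0_le_one)
        linarith [mul_le_of_le_one_left this (div_self_le_one (n : ℝ))]

/-- general entropy bound in terms of the mass of zero: for every `a > 1`,
with `φ(a) = 1 − (1/2a)·log(2ae)`,
`(1/n)H(X) ≤ −(1/n)log P₀(Λ) + a(1−P₀(Λ)) + e^{−aφ(a)n}/(nφ(a))`. -/
theorem entropy_vs_mass_of_zero_general (n : ℕ) (L : Submodule ℤ (EuclideanSpace ℝ (Fin n)))
    [DiscreteTopology L] [IsZLattice ℝ L]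
    (σs : ℝ) (hσs : 0 < σs)
    (P0 : ℝ)
    (hP0 : P0 = ((2 * π * σs ^ 2) ^ ((n : ℝ) / 2) * gaussMass n σs (L : Set (EuclideanSpace ℝ (Fin n))))⁻¹)
    (a : ℝ) (ha : 1 < a)
    (φ : ℝ) (hφ : φ = 1 - (1 / (2 * a)) * Real.log (2 * a * Real.exp 1)) :
    (1 / (n : ℝ)) * dgEntropy n σs (L : Set (EuclideanSpace ℝ (Fin n))) ≤
      -(1 / (n : ℝ)) * Real.log P0 + a * (1 - P0) +
        Real.exp (-a * φ * n) / (n * φ) :=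
  entropy_vs_mass_of_zero_general_general n L σs hσs.ne' P0 hP0 a (by linarith) φ hφ
end
end

section
/- Let Λ ⊂ ℝ^n be a full-rank lattice, σ_s, σ_w > 0, α = σ_s²/(σ_s²+σ_w²) and σ_eff² = σ_s²σ_w²/(σ_s²+σ_w²). Then f_{σ_s}(Λ) = ∫_{ℝ^n} f_{σ_eff}(w) · f_{√α·σ_s}(Λ + w) dw = ∫_{V(Λ)} f_{σ_eff}(Λ + w) · f_{√α·σ_s}(Λ + w) dw, where the second integral is over the Voronoi cell of Λ. -/
open MeasureTheory Real Filter Pointwise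
open scoped ENNReal RealInnerProductSpace

noncomputable section

/-!
If `e² + t² = s²`, then completing the square gives
`f_e(w) f_t(y + w) = f_s(y) f_{et/s}(w + (e²/s²) y)`, so integrating over `w` leaves `f_s(y)`;
summing over `y ∈ Λ` yields the first identity. Since `w ↦ f_t(Λ + w)` is `Λ`-periodic and the
Voronoi cell is a fundamental domain of `Λ`, folding the integral onto the cell replaces the factor
`f_e(w)` by `f_e(Λ + w)`, which yields the second.
-/

section Gaussian

variable {n : ℕ} {σ s e t : ℝ}

lemma gaussF_nonneg (σ : ℝ) (x : EuclideanSpace ℝ (Fin n)) : 0 ≤ gaussF n σ x := by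
  unfold gaussF
  positivity

lemma gaussF_pos (hσ : σ ≠ 0) (x : EuclideanSpace ℝ (Fin n)) : 0 < gaussF n σ x := by
  unfold gaussF
  positivity

lemma integral_gaussF (hσ : σ ≠ 0) : ∫ x, gaussF n σ x = 1 := by
  have exponent_eq (x : EuclideanSpace ℝ (Fin n)) :
      -‖x‖ ^ 2 / (2 * σ ^ 2) = -(1 / (2 * σ ^ 2)) * ‖x‖ ^ 2 := by ring
  have integral_exp : ∫ x : EuclideanSpace ℝ (Fin n), rexp (-‖x‖ ^ 2 / (2 * σ ^ 2)) =
      (2 * π * σ ^ 2) ^ ((n : ℝ) / 2) := by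
    simp_rw [exponent_eq]
    rw [GaussianFourier.integral_rexp_neg_mul_sq_norm (by positivity), finrank_euclideanSpace_fin]
    congr 1
    field_simp
  unfold gaussF
  rw [integral_const_mul, integral_exp, ← rpow_add (by positivity), neg_div, neg_add_cancel,
    rpow_zero]

lemma integrable_gaussF (hσ : σ ≠ 0) : Integrable (gaussF n σ) :=
  .of_integral_ne_zero (by rw [integral_gaussF hσ]; exact one_ne_zero)

theorem gaussF_mul_gaussF_add (he : e ≠ 0) (ht : t ≠ 0) (hs : s ≠ 0) (h : e ^ 2 + t ^ 2 = s ^ 2)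
    (y w : EuclideanSpace ℝ (Fin n)) :
    gaussF n e w * gaussF n t (y + w) =
      gaussF n s y * gaussF n (e * t / s) (w + (e ^ 2 / s ^ 2) • y) := by
  have prefactor_eq :
      (2 * π * e ^ 2) ^ (-(n : ℝ) / 2) * (2 * π * t ^ 2) ^ (-(n : ℝ) / 2) =
        (2 * π * s ^ 2) ^ (-(n : ℝ) / 2) * (2 * π * (e * t / s) ^ 2) ^ (-(n : ℝ) / 2) := by
    rw [← mul_rpow (by positivity) (by positivity), ← mul_rpow (by positivity) (by positivity)]
    congr 1
    field_simp
  have exponent_eq :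
      -‖w‖ ^ 2 / (2 * e ^ 2) + -‖y + w‖ ^ 2 / (2 * t ^ 2) =
        -‖y‖ ^ 2 / (2 * s ^ 2) +
          -‖w + (e ^ 2 / s ^ 2) • y‖ ^ 2 / (2 * (e * t / s) ^ 2) := by
    rw [norm_add_sq_real, norm_add_sq_real, norm_smul, inner_smul_right, real_inner_comm y w,
      mul_pow, norm_of_nonneg (by positivity : 0 ≤ e ^ 2 / s ^ 2)]
    field_simp
    rw [← h]
    ring
  unfold gaussF
  rw [mul_mul_mul_comm, ← exp_add, prefactor_eq, exponent_eq, exp_add, mul_mul_mul_comm]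

lemma integrable_gaussF_mul_gaussF_add (he : e ≠ 0) (ht : t ≠ 0) (hs : s ≠ 0)
    (h : e ^ 2 + t ^ 2 = s ^ 2) (y : EuclideanSpace ℝ (Fin n)) :
    Integrable fun w ↦ gaussF n e w * gaussF n t (y + w) := by
  simp_rw [gaussF_mul_gaussF_add he ht hs h]
  exact ((integrable_gaussF (by positivity)).comp_add_right _).const_mul _

lemma integral_gaussF_mul_gaussF_add (he : e ≠ 0) (ht : t ≠ 0) (hs : s ≠ 0)
    (h : e ^ 2 + t ^ 2 = s ^ 2) (y : EuclideanSpace ℝ (Fin n)) :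
    ∫ w, gaussF n e w * gaussF n t (y + w) = gaussF n s y := by
  simp_rw [gaussF_mul_gaussF_add he ht hs h]
  rw [integral_const_mul, integral_add_right_eq_self (gaussF n (e * t / s)),
    integral_gaussF (by positivity), mul_one]

end Gaussian

section GaussMass

variable {n : ℕ} {σ s e t : ℝ} {S : Set (EuclideanSpace ℝ (Fin n))}

lemma gaussMass_coset (σ : ℝ) (S : Set (EuclideanSpace ℝ (Fin n)))
    (w : EuclideanSpace ℝ (Fin n)) :
    gaussMass n σ (coset n S w) = ∑' y : S, gaussF n σ (y + w) :=
  let addRight : S ≃ coset n S w :=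
    (Equiv.addRight w).subtypeEquiv fun y ↦ by simp [coset]
  (addRight.tsum_eq fun x ↦ gaussF n σ x).symm

lemma gaussMass_pos (hσ : σ ≠ 0) (hS : S.Nonempty)
    (hsum : Summable fun y : S ↦ gaussF n σ y) : 0 < gaussMass n σ S :=
  let ⟨y, hy⟩ := hS
  hsum.tsum_pos (fun y ↦ gaussF_nonneg σ y.1) ⟨y, hy⟩ (gaussF_pos hσ y)

lemma countable_of_summable_gaussF (hσ : σ ≠ 0) (hsum : Summable fun y : S ↦ gaussF n σ y) :
    Countable S := by
  have support_eq : (Function.support fun y : S ↦ gaussF n σ y) = Set.univ :=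
    Function.support_eq_univ fun y ↦ (gaussF_pos hσ y.1).ne'
  exact Set.countable_univ_iff.1 (support_eq ▸ hsum.countable_support)

theorem gaussMass_eq_integral_gaussF_mul
    (hsum : Summable fun y : S ↦ gaussF n s y)
    (he : e ≠ 0) (ht : t ≠ 0) (hs : s ≠ 0) (h : e ^ 2 + t ^ 2 = s ^ 2) :
    gaussMass n s S = ∫ w, gaussF n e w * gaussMass n t (coset n S w) := by
  have : Countable S := countable_of_summable_gaussF hs hsum
  have norm_eq (y w : EuclideanSpace ℝ (Fin n)) :
      ‖gaussF n e w * gaussF n t (y + w)‖ = gaussF n e w * gaussF n t (y + w) :=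
    norm_of_nonneg (mul_nonneg (gaussF_nonneg e w) (gaussF_nonneg t (y + w)))
  have integral_eq := integral_gaussF_mul_gaussF_add (n := n) he ht hs h
  have integrable := integrable_gaussF_mul_gaussF_add (n := n) he ht hs h
  calc gaussMass n s S
      = ∑' y : S, ∫ w, gaussF n e w * gaussF n t (y.1 + w) :=
        tsum_congr fun y ↦ (integral_eq y.1).symm
    _ = ∫ w, ∑' y : S, gaussF n e w * gaussF n t (y.1 + w) :=
        integral_tsum_of_summable_integral_norm (fun y ↦ integrable y.1)
          (by simpa only [norm_eq, integral_eq] using hsum)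
    _ = ∫ w, gaussF n e w * gaussMass n t (coset n S w) := by
        simp_rw [tsum_mul_left, gaussMass_coset]

-- The Bochner integral of a non-integrable function would be `0`, but `f_s(S) > 0`.
lemma integrable_gaussF_mul_gaussMass_coset (hS : S.Nonempty)
    (hsum : Summable fun y : S ↦ gaussF n s y)
    (he : e ≠ 0) (ht : t ≠ 0) (hs : s ≠ 0) (h : e ^ 2 + t ^ 2 = s ^ 2) :
    Integrable fun w ↦ gaussF n e w * gaussMass n t (coset n S w) := by
  apply Integrable.of_integral_ne_zero
  rw [← gaussMass_eq_integral_gaussF_mul hsum he ht hs h]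
  exact (gaussMass_pos hs hS hsum).ne'

end GaussMass

section Voronoi

variable {n : ℕ}

lemma mem_voronoi_iff_norm_le {S : Set (EuclideanSpace ℝ (Fin n))}
    {x : EuclideanSpace ℝ (Fin n)} : x ∈ voronoi n S ↔ ∀ y ∈ S, ‖x‖ ≤ ‖x - y‖ := by
  refine forall₂_congr fun y _ ↦ ?_
  rw [← sq_le_sq₀ (norm_nonneg x) (norm_nonneg (x - y)), norm_sub_sq_real]
  constructor <;> intro <;> linarith

lemma isClosed_voronoi (S : Set (EuclideanSpace ℝ (Fin n))) : IsClosed (voronoi n S) := by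
  simp only [voronoi, Set.ofPred_forall]
  exact isClosed_biInter fun y _ ↦ isClosed_le (by fun_prop) continuous_const

variable (L : Submodule ℤ (EuclideanSpace ℝ (Fin n)))

lemma exists_vadd_mem_voronoi [DiscreteTopology L] (x : EuclideanSpace ℝ (Fin n)) :
    ∃ g : L, g +ᵥ x ∈ voronoi n (L : Set (EuclideanSpace ℝ (Fin n))) := by
  have : DiscreteTopology L.toAddSubgroup := ‹DiscreteTopology L›
  have isClosed_L : IsClosed (L : Set (EuclideanSpace ℝ (Fin n))) :=
    AddSubgroup.isClosed_of_discrete (H := L.toAddSubgroup)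
  obtain ⟨y, hy, nearest⟩ := isClosed_L.exists_infDist_eq_dist ⟨0, L.zero_mem⟩ x
  refine ⟨⟨-y, L.neg_mem hy⟩, mem_voronoi_iff_norm_le.2 fun z hz ↦ ?_⟩
  have dist_le : dist x y ≤ dist x (y + z) :=
    nearest ▸ Metric.infDist_le_dist_of_mem (L.add_mem hy hz)
  rw [Submodule.vadd_def, vadd_eq_add, neg_add_eq_sub, sub_sub]
  simpa only [dist_eq_norm] using dist_le

lemma voronoi_inter_vadd_subset_perpBisector (g : L) :
    (g +ᵥ voronoi n (L : Set (EuclideanSpace ℝ (Fin n)))) ∩ voronoi n L ⊆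
      AffineSubspace.perpBisector (0 : EuclideanSpace ℝ (Fin n)) g := by
  rintro _ ⟨⟨u, hu, rfl⟩, hgu⟩
  have norm_le := mem_voronoi_iff_norm_le.1 hu (-g) (L.neg_mem g.2)
  have le_norm := mem_voronoi_iff_norm_le.1 hgu g g.2
  simp only [vadd_eq_add, add_sub_cancel_left, sub_neg_eq_add] at norm_le le_norm
  rw [SetLike.mem_coe, AffineSubspace.mem_perpBisector_iff_dist_eq, dist_zero_right, dist_eq_norm]
  simp only [vadd_eq_add, add_sub_cancel_left]
  exact le_antisymm le_norm (add_comm u g ▸ norm_le)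

variable (μ : Measure (EuclideanSpace ℝ (Fin n))) [μ.IsAddHaarMeasure]

instance vaddInvariantMeasure_submodule :
    VAddInvariantMeasure L (EuclideanSpace ℝ (Fin n)) μ :=
  inferInstanceAs (VAddInvariantMeasure L.toAddSubgroup _ μ)

theorem isAddFundamentalDomain_voronoi [DiscreteTopology L] :
    IsAddFundamentalDomain L (voronoi n (L : Set (EuclideanSpace ℝ (Fin n)))) μ := by
  refine .mk'' (isClosed_voronoi _).measurableSet.nullMeasurableSet
    (.of_forall (exists_vadd_mem_voronoi L)) (fun g hg ↦ ?_)
    fun g ↦ (measurePreserving_vadd g μ).quasiMeasurePreserving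
  refine measure_mono_null (voronoi_inter_vadd_subset_perpBisector L g)
    (Measure.addHaar_affineSubspace μ _ ?_)
  simpa [AffineSubspace.perpBisector_eq_top, eq_comm] using hg

end Voronoi

theorem integral_eq_setIntegral_tsum_vadd {G X E : Type*} [AddGroup G] [Countable G]
    [AddAction G X] [MeasurableSpace X] [MeasurableConstVAdd G X]
    [NormedAddCommGroup E] [NormedSpace ℝ E] {μ : Measure X} [VAddInvariantMeasure G X μ]
    {D : Set X} (hD : IsAddFundamentalDomain G D μ) {f : X → E} (hf : Integrable f μ) :
    ∫ x, f x ∂μ = ∫ x in D, ∑' g : G, f (g +ᵥ x) ∂μ := by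
  rw [hD.integral_eq_tsum'' f hf, integral_tsum]
  · exact fun g ↦ (hf.1.comp_measurePreserving (measurePreserving_vadd g μ)).restrict
  · rw [← hD.lintegral_eq_tsum'' fun x ↦ ‖f x‖ₑ]
    exact hf.2.ne

section Lattice

variable {n : ℕ} (L : Submodule ℤ (EuclideanSpace ℝ (Fin n)))

lemma summable_gaussF [DiscreteTopology L] {σ : ℝ} (hσ : σ ≠ 0) :
    Summable fun y : L ↦ gaussF n σ y := by
  have : DiscreteTopology L.toAddSubgroup := ‹DiscreteTopology L›
  have norm_tendsto : Tendsto (fun y : L ↦ ‖y‖) cofinite atTop :=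
    (tendsto_norm_cocompact_atTop (E := EuclideanSpace ℝ (Fin n))).comp
      (L.toAddSubgroup.tendsto_coe_cofinite_of_discrete
        (isDiscrete_iff_discreteTopology.2 inferInstance))
  let r : ℝ := -Module.finrank ℤ L - 1
  have exp_isBigO : (fun u : ℝ ↦ rexp (-(1 / (2 * σ ^ 2)) * u ^ 2)) =O[atTop] fun u ↦ u ^ r :=
    (exp_neg_mul_sq_isLittleO_exp_neg (by positivity)).isBigO.trans
      (by simpa only [neg_one_mul] using (isLittleO_exp_neg_mul_rpow_atTop one_pos r).isBigO)
  have summable_exp : Summable fun y : L ↦ rexp (-(1 / (2 * σ ^ 2)) * ‖y‖ ^ 2) :=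
    summable_of_isBigO (ZLattice.summable_norm_rpow L r (sub_one_lt _))
      (exp_isBigO.comp_tendsto norm_tendsto)
  refine (summable_exp.mul_left ((2 * π * σ ^ 2) ^ (-(n : ℝ) / 2))).congr fun y ↦ ?_
  rw [gaussF, Submodule.coe_norm]
  ring_nf

lemma coset_vadd (g : L) (w : EuclideanSpace ℝ (Fin n)) :
    coset n (L : Set (EuclideanSpace ℝ (Fin n))) (g +ᵥ w) = coset n L w := by
  ext x
  simp only [coset, Set.mem_ofPred_eq, SetLike.mem_coe, Submodule.vadd_def, vadd_eq_add]
  rw [add_comm, ← sub_sub, L.sub_mem_iff_left g.2]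

theorem integral_gaussF_mul_eq_setIntegral_voronoi [DiscreteTopology L] {s e t : ℝ}
    (he : e ≠ 0) (ht : t ≠ 0) (hs : s ≠ 0) (h : e ^ 2 + t ^ 2 = s ^ 2) :
    ∫ w, gaussF n e w * gaussMass n t (coset n L w) =
      ∫ w in voronoi n L, gaussMass n e (coset n L w) * gaussMass n t (coset n L w) := by
  have : Countable L := countable_of_summable_gaussF hs (summable_gaussF L hs)
  rw [integral_eq_setIntegral_tsum_vadd (isAddFundamentalDomain_voronoi L volume)
    (integrable_gaussF_mul_gaussMass_coset ⟨0, L.zero_mem⟩ (summable_gaussF L hs)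
      he ht hs h)]
  simp_rw [coset_vadd, tsum_mul_right, gaussMass_coset e]
  rfl

end Lattice

theorem gauss_mass_integral_identities_general (n : ℕ) (L : Submodule ℤ (EuclideanSpace ℝ (Fin n)))
    [DiscreteTopology L]
    (σs σw : ℝ) (hσs : σs ≠ 0) (hσw : σw ≠ 0)
    (α σeff : ℝ)
    (hα : α = σs ^ 2 / (σs ^ 2 + σw ^ 2))
    (hσeff : σeff = Real.sqrt (σs ^ 2 * σw ^ 2 / (σs ^ 2 + σw ^ 2))) :
    gaussMass n σs (L : Set (EuclideanSpace ℝ (Fin n))) =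
        ∫ w, gaussF n σeff w *
          gaussMass n (Real.sqrt α * σs) (coset n (L : Set (EuclideanSpace ℝ (Fin n))) w) ∧
      gaussMass n σs (L : Set (EuclideanSpace ℝ (Fin n))) =
        ∫ w in voronoi n (L : Set (EuclideanSpace ℝ (Fin n))),
          gaussMass n σeff (coset n (L : Set (EuclideanSpace ℝ (Fin n))) w) *
            gaussMass n (Real.sqrt α * σs) (coset n (L : Set (EuclideanSpace ℝ (Fin n))) w) := by
  have σeff_ne : σeff ≠ 0 := by rw [hσeff]; positivity
  have t_ne : √α * σs ≠ 0 := by rw [hα]; positivity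
  have variance_add : σeff ^ 2 + (√α * σs) ^ 2 = σs ^ 2 := by
    rw [hσeff, mul_pow, sq_sqrt (by positivity), sq_sqrt (by rw [hα]; positivity), hα]
    field_simp
    ring
  have first_identity := gaussMass_eq_integral_gaussF_mul (summable_gaussF L hσs)
    σeff_ne t_ne hσs variance_add
  exact ⟨first_identity, first_identity.trans
    (integral_gaussF_mul_eq_setIntegral_voronoi L σeff_ne t_ne hσs variance_add)⟩

/-- two expressions for the Gaussian mass of the lattice:
`f_{σ_s}(Λ) = ∫ f_{σ_eff}(w)·f_{√α·σ_s}(Λ+w) dw = ∫_{V(Λ)} f_{σ_eff}(Λ+w)·f_{√α·σ_s}(Λ+w) dw`. -/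
theorem gauss_mass_integral_identities (n : ℕ) (L : Submodule ℤ (EuclideanSpace ℝ (Fin n)))
    [DiscreteTopology L] [IsZLattice ℝ L]
    (σs σw : ℝ) (hσs : 0 < σs) (hσw : 0 < σw)
    (α σeff : ℝ)
    (hα : α = σs ^ 2 / (σs ^ 2 + σw ^ 2))
    (hσeff : σeff = Real.sqrt (σs ^ 2 * σw ^ 2 / (σs ^ 2 + σw ^ 2))) :
    gaussMass n σs (L : Set (EuclideanSpace ℝ (Fin n))) =
        ∫ w, gaussF n σeff w *
          gaussMass n (Real.sqrt α * σs) (coset n (L : Set (EuclideanSpace ℝ (Fin n))) w) ∧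
      gaussMass n σs (L : Set (EuclideanSpace ℝ (Fin n))) =
        ∫ w in voronoi n (L : Set (EuclideanSpace ℝ (Fin n))),
          gaussMass n σeff (coset n (L : Set (EuclideanSpace ℝ (Fin n))) w) *
            gaussMass n (Real.sqrt α * σs) (coset n (L : Set (EuclideanSpace ℝ (Fin n))) w) :=
  gauss_mass_integral_identities_general n L σs σw hσs.ne' hσw.ne' α σeff hα hσeff
end
end
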